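/- Let F be a field of characteristic zero, P ∈ F[x_1,…,x_n], and assume the hypersurface P = 0 is smooth, i.e., the ideal generated by P, ∂_1P, …, ∂_nP is the unit ideal of F[x_1,…,x_n]. Let Ω denote the complex of polynomial differential forms on F^n with the de Rham differential d, and let Ω/(P,dP) denote the quotient complex of Ω by the subcomplex P·Ω + dP∧Ω (which is stable under d), with the induced differential. Let Ω' denote the twisted de Rham complex of the function f(t,x_1,…,x_n) = t·P(x_1,…,x_n) on F^{n+1}, with differential d_f = d + d(tP)∧. Then the map ω ↦ ω̃∧dP∧dt, where ω̃ ∈ Ω is any lift of ω, induces for every k an isomorphism H^k(Ω/(P,dP)) ≅ H^{k+2}_{tP}(F^{n+1}). -/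

import Mathlib

open MvPolynomial

noncomputable section

/-- Polynomial differential forms on `K^n`: a form assigns to each subset
`s ⊆ {1,…,n}` (the indices of `dx_{i_1} ∧ ⋯ ∧ dx_{i_k}` with `i_1 < ⋯ < i_k`)
a polynomial coefficient. -/
abbrev Form (n : ℕ) (K : Type*) [CommRing K] :=
  Finset (Fin n) → MvPolynomial (Fin n) K

/-- The sign `(-1)^{#{j ∈ s | j < i}}`. -/
def sgn {n : ℕ} (K : Type*) [CommRing K] (s : Finset (Fin n)) (i : Fin n) :
    MvPolynomial (Fin n) K :=
  (-1) ^ (s.filter (fun j => j < i)).card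

/-- The twisted de Rham differential `d_α ω = dω + α ∧ ω` associated to a
(closed) polynomial 1-form `α = Σ_i α_i dx_i`. -/
def dTwist {n : ℕ} {K : Type*} [CommRing K]
    (α : Fin n → MvPolynomial (Fin n) K) :
    Form n K →ₗ[K] Form n K where
  toFun ω := fun s => ∑ i ∈ s,
    sgn K s i * (pderiv i (ω (s.erase i)) + α i * ω (s.erase i))
  map_add' ω₁ ω₂ := by
    funext s
    simp only [Pi.add_apply]
    rw [← Finset.sum_add_distrib]
    refine Finset.sum_congr rfl fun i _ => ?_
    simp only [map_add]
    ring
  map_smul' c ω := by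
    funext s
    simp only [Pi.smul_apply, map_smul, RingHom.id_apply, Finset.smul_sum]
    refine Finset.sum_congr rfl fun i _ => ?_
    simp [mul_add, mul_smul_comm, smul_add, mul_assoc]

/-- The (untwisted) polynomial de Rham differential. -/
abbrev dRham (n : ℕ) (K : Type*) [CommRing K] : Form n K →ₗ[K] Form n K :=
  dTwist (fun _ => 0)

/-- Multiplication of a form by a 1-form `α`, `ω ↦ α ∧ ω`. -/
def wedge1 {n : ℕ} {K : Type*} [CommRing K]
    (α : Fin n → MvPolynomial (Fin n) K) :
    Form n K →ₗ[K] Form n K where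
  toFun ω := fun s => ∑ i ∈ s, sgn K s i * (α i * ω (s.erase i))
  map_add' ω₁ ω₂ := by
    funext s
    simp only [Pi.add_apply]
    rw [← Finset.sum_add_distrib]
    refine Finset.sum_congr rfl fun i _ => ?_
    ring
  map_smul' c ω := by
    funext s
    simp only [Pi.smul_apply, RingHom.id_apply, Finset.smul_sum]
    refine Finset.sum_congr rfl fun i _ => ?_
    simp [mul_smul_comm]

/-- Forms of pure degree `k`: those supported on index sets of cardinality `k`. -/
def formDeg (n : ℕ) (K : Type*) [CommRing K] (k : ℕ) : Submodule K (Form n K) where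
  carrier := {ω | ∀ s : Finset (Fin n), s.card ≠ k → ω s = 0}
  add_mem' := by
    intro a b ha hb s hs
    simp [Pi.add_apply, ha s hs, hb s hs]
  zero_mem' := fun s _ => rfl
  smul_mem' := by
    intro c a ha s hs
    simp [Pi.smul_apply, ha s hs]

/-- Degree-`k` cocycles of the twisted de Rham complex. -/
def cocycles {n : ℕ} {K : Type*} [CommRing K]
    (α : Fin n → MvPolynomial (Fin n) K) (k : ℕ) : Submodule K (Form n K) :=
  formDeg n K k ⊓ LinearMap.ker (dTwist α)

/-- Degree-`k` coboundaries of the twisted de Rham complex. -/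
def cobounds {n : ℕ} {K : Type*} [CommRing K]
    (α : Fin n → MvPolynomial (Fin n) K) (k : ℕ) : Submodule K (Form n K) :=
  Submodule.map (dTwist α) (formDeg n K (k - 1))

/-- The degree-`k` twisted de Rham cohomology of the 1-form `α`. -/
abbrev Htwist {n : ℕ} {K : Type*} [CommRing K]
    (α : Fin n → MvPolynomial (Fin n) K) (k : ℕ) :=
  (cocycles α k) ⧸ (Submodule.comap (cocycles α k).subtype (cobounds α k))

/-- The differential `df` of a polynomial, as the family of coefficients of the
1-form `Σ_i (∂f/∂x_i) dx_i`. -/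
def grad {n : ℕ} {K : Type*} [CommRing K] (f : MvPolynomial (Fin n) K) :
    Fin n → MvPolynomial (Fin n) K :=
  fun i => pderiv i f

/-- The twisted de Rham cohomology `H^k_f(K)` of a polynomial `f`. -/
abbrev Hf {n : ℕ} {K : Type*} [CommRing K] (f : MvPolynomial (Fin n) K) (k : ℕ) :=
  Htwist (grad f) k

/-- The top form `dx_1 ∧ ⋯ ∧ dx_n`. -/
def topForm (n : ℕ) (K : Type*) [CommRing K] : Form n K :=
  fun s => if s = Finset.univ then 1 else 0


/-- Multiplication of forms by the polynomial `P`, as a linear map. -/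
def mulForm {n : ℕ} {K : Type*} [CommRing K] (P : MvPolynomial (Fin n) K) :
    Form n K →ₗ[K] Form n K where
  toFun ω := fun s => P * ω s
  map_add' ω₁ ω₂ := by funext s; simp [Pi.add_apply, mul_add]
  map_smul' c ω := by funext s; simp [Pi.smul_apply, mul_smul_comm]

/-- The subcomplex `P·Ω + dP∧Ω` of the polynomial de Rham complex. -/
def relSub {n : ℕ} {K : Type*} [CommRing K] (P : MvPolynomial (Fin n) K) :
    Submodule K (Form n K) :=
  LinearMap.range (mulForm P) ⊔ LinearMap.range (wedge1 (grad P))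

/-- Degree-`k` cocycles of the quotient complex `Ω/(P,dP)`: degree-`k` forms
whose de Rham differential lies in `P·Ω + dP∧Ω`. -/
def relZ {n : ℕ} {K : Type*} [CommRing K] (P : MvPolynomial (Fin n) K)
    (k : ℕ) : Submodule K (Form n K) :=
  formDeg n K k ⊓ Submodule.comap (dRham n K) (relSub P)

/-- Degree-`k` coboundaries of the quotient complex `Ω/(P,dP)`. -/
def relB {n : ℕ} {K : Type*} [CommRing K] (P : MvPolynomial (Fin n) K)
    (k : ℕ) : Submodule K (Form n K) :=
  Submodule.map (dRham n K) (formDeg n K (k - 1)) ⊔ relSub P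

/-- The degree-`k` cohomology of the quotient complex `Ω/(P,dP)`, i.e. the
algebraic de Rham cohomology of the affine hypersurface `P = 0`. -/
abbrev relH {n : ℕ} {K : Type*} [CommRing K] (P : MvPolynomial (Fin n) K)
    (k : ℕ) :=
  (relZ P k) ⧸ (Submodule.comap (relZ P k).subtype (relB P k))

/-- The extension `ω̃` of a polynomial form on `K^n` to `K^{n+1}` (the lift
along the projection forgetting the last coordinate `t`). -/
def extForm {n : ℕ} {K : Type*} [CommRing K] (ω : Form n K) : Form (n + 1) K :=
  fun s' => ∑ s : Finset (Fin n),
    if s' = Finset.image Fin.castSucc s then rename Fin.castSucc (ω s) else 0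

/-- The coefficients of the 1-form `dt` on `K^{n+1}` (where `t` is the last
coordinate). -/
def dtForm (n : ℕ) (K : Type*) [CommRing K] :
    Fin (n + 1) → MvPolynomial (Fin (n + 1)) K :=
  fun i => if i = Fin.last n then 1 else 0

/-- The coefficients of the 1-form `dP` lifted to `K^{n+1}`. -/
def liftDP {n : ℕ} {K : Type*} [CommRing K] (P : MvPolynomial (Fin n) K) :
    Fin (n + 1) → MvPolynomial (Fin (n + 1)) K :=
  fun i => Fin.lastCases 0 (fun j => rename Fin.castSucc (pderiv j P)) i

/-- The map `ω ↦ ω̃ ∧ dP ∧ dt` from forms on `K^n` to forms on `K^{n+1}`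
(using `ω ∧ dP ∧ dt = −dt ∧ dP ∧ ω̃`). -/
def thetaMap {n : ℕ} {K : Type*} [CommRing K] (P : MvPolynomial (Fin n) K)
    (ω : Form n K) : Form (n + 1) K :=
  fun s' => -(wedge1 (dtForm n K) (wedge1 (liftDP P) (extForm ω)) s')

/-- The function `f(t,x) = t·P(x)` on `K^{n+1}`. -/
def tP {n : ℕ} {K : Type*} [CommRing K] (P : MvPolynomial (Fin n) K) :
    MvPolynomial (Fin (n + 1)) K :=
  X (Fin.last n) * rename Fin.castSucc P

/-- Linear relation which is total on both sides modulo subspaces gives an isomorphism. -/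
theorem equiv_of_relation {F A B : Type*} [Field F] [AddCommGroup A] [Module F A]
    [AddCommGroup B] [Module F B] (A0 : Submodule F A) (B0 : Submodule F B)
    (R : Submodule F (A × B))
    (h1 : ∀ a, ∃ b, (a, b) ∈ R)
    (h2 : ∀ b, ∃ a b', (a, b') ∈ R ∧ b - b' ∈ B0)
    (h3 : ∀ a b, (a, b) ∈ R → (a ∈ A0 ↔ b ∈ B0)) :
    ∃ e : (A ⧸ A0) ≃ₗ[F] (B ⧸ B0), ∀ a b, (a, b) ∈ R →
      e (Submodule.Quotient.mk a) = Submodule.Quotient.mk b := by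
  let f : R →ₗ[F] A ⧸ A0 := A0.mkQ ∘ₗ LinearMap.fst F A B ∘ₗ R.subtype
  let g : R →ₗ[F] B ⧸ B0 := B0.mkQ ∘ₗ LinearMap.snd F A B ∘ₗ R.subtype
  have hf : Function.Surjective f := by
    intro x
    obtain ⟨a, rfl⟩ := Submodule.Quotient.mk_surjective _ x
    obtain ⟨b, hb⟩ := h1 a
    exact ⟨⟨(a, b), hb⟩, rfl⟩
  have hg : Function.Surjective g := by
    intro x
    obtain ⟨b, rfl⟩ := Submodule.Quotient.mk_surjective _ x
    obtain ⟨a, b', hb, hb'⟩ := h2 b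
    refine ⟨⟨(a, b'), hb⟩, ?_⟩
    exact ((Submodule.Quotient.eq B0).2 hb').symm
  have hk : LinearMap.ker f = LinearMap.ker g := by
    ext ⟨⟨a, b⟩, hab⟩
    simp only [LinearMap.mem_ker]
    change Submodule.Quotient.mk a = 0 ↔ Submodule.Quotient.mk b = 0
    rw [Submodule.Quotient.mk_eq_zero, Submodule.Quotient.mk_eq_zero]
    exact h3 a b hab
  refine ⟨(f.quotKerEquivOfSurjective hf).symm ≪≫ₗ Submodule.quotEquivOfEq _ _ hk ≪≫ₗ
    g.quotKerEquivOfSurjective hg, ?_⟩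
  intro a b hab
  have : (f.quotKerEquivOfSurjective hf).symm (Submodule.Quotient.mk a)
      = Submodule.Quotient.mk ⟨(a, b), hab⟩ := by
    rw [LinearEquiv.symm_apply_eq]
    rfl
  simp only [LinearEquiv.trans_apply, this]
  rfl

/-- The abstract situation. `M` plays the role of the forms on `F^n`, `V` of the forms on
`F^(n+1)`; `ca j v + dt ∧ cb j v` is the coefficient of `t^j`. -/
structure Setup (F M V : Type*) [Field F] [AddCommGroup M] [Module F M]
    [AddCommGroup V] [Module F V] where
  d : M →ₗ[F] M
  w : M →ₗ[F] M
  p : M →ₗ[F] M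
  io : M →ₗ[F] M
  g : M →ₗ[F] M
  G : ℕ → Submodule F M
  H : ℕ → Submodule F V
  δ : V →ₗ[F] V
  ca : ℕ → V →ₗ[F] M
  cb : ℕ → V →ₗ[F] M
  dd : ∀ x, d (d x) = 0
  ww : ∀ x, w (w x) = 0
  dw : ∀ x, d (w x) = - w (d x)
  dp : ∀ x, d (p x) = w x + p (d x)
  wp : ∀ x, w (p x) = p (w x)
  iop : ∀ x, io (p x) = p (io x)
  hom : ∀ x, x = w (io x) + io (w x) + p (g x)
  p_inj : ∀ x, p x = 0 → x = 0
  G_d : ∀ k x, x ∈ G k → d x ∈ G (k + 1)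
  G_w : ∀ k x, x ∈ G k → w x ∈ G (k + 1)
  G_p : ∀ k x, p x ∈ G k ↔ x ∈ G k
  G_g : ∀ k x, x ∈ G k → g x ∈ G k
  G_io : ∀ k x, x ∈ G k → io x ∈ G (k - 1)
  G_io0 : ∀ x, x ∈ G 0 → io x = 0
  G_B : ∀ k x η α β, x ∈ G k → η ∈ G (k - 1) → x = d η + p α + w β →
    ∃ η' α' β', x = d η' + p α' + w β' ∧ w η' ∈ G k ∧ α' ∈ G k
  H_iff : ∀ k v, v ∈ H (k + 1) ↔ ∀ j, ca j v ∈ G (k + 1) ∧ cb j v ∈ G k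
  inj : ∀ v, (∀ j, ca j v = 0) → (∀ j, cb j v = 0) → v = 0
  fin : ∀ v, ∃ N, ∀ j, N ≤ j → ca j v = 0 ∧ cb j v = 0
  sur : ∀ i x y, ∃ v, (∀ j, ca j v = if j = i then x else 0) ∧
    (∀ j, cb j v = if j = i then y else 0)
  ca0 : ∀ v, ca 0 (δ v) = d (ca 0 v)
  ca1 : ∀ j v, ca (j + 1) (δ v) = d (ca (j + 1) v) + w (ca j v)
  cb0 : ∀ v, cb 0 (δ v) = ca 1 v + p (ca 0 v) - d (cb 0 v)
  cb1 : ∀ j v, cb (j + 1) (δ v) = ((j : F) + 2) • ca (j + 2) v + p (ca (j + 1) v)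
    - d (cb (j + 1) v) - w (cb j v)

namespace Setup

variable {F M V : Type*} [Field F] [AddCommGroup M] [Module F M]
    [AddCommGroup V] [Module F V] (S : Setup F M V)

theorem δδ (v : V) : S.δ (S.δ v) = 0 := by
  apply S.inj
  · intro j
    rcases j with _ | _ | j
    · simp [S.ca0, S.dd]
    · simp [S.ca1, S.ca0, S.dd, S.dw]
    · simp [S.ca1, S.dd, S.dw, S.ww]
  · intro j
    rcases j with _ | _ | j
    · simp only [S.cb0, S.ca0, S.ca1, zero_add, map_add, map_sub, S.dd, S.dp]
      abel
    · simp only [S.cb1, S.cb0, S.ca1, S.ca0, zero_add, map_add, map_sub, map_smul, S.dd, S.dp,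
        S.dw, S.ww, S.wp, Nat.cast_zero, smul_add, two_smul]
      abel
    · simp only [S.cb1, S.ca1, map_add, map_sub, map_smul, S.dd, S.dp,
        S.dw, S.ww, S.wp, smul_add, Nat.cast_add, Nat.cast_one]
      module

/-- If the `dt`-part of `δ v` and of `v` vanish above, so does the other part. -/
theorem ca_van (v : V) (N : ℕ) (h1 : ∀ j, 1 ≤ j → S.cb j (S.δ v) = 0)
    (h2 : ∀ j, N ≤ j → S.cb j v = 0) : ∀ j, N + 1 ≤ j → S.ca j v = 0 := by
  obtain ⟨K, hK⟩ := S.fin v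
  have key : ∀ m j, N + 1 ≤ j → K ≤ j + m → S.ca j v = 0 := by
    intro m
    induction m with
    | zero => intro j _ h; exact (hK j h).1
    | succ m ih =>
      intro j hj h
      obtain ⟨i, rfl⟩ : ∃ i, j = i + 1 := ⟨j - 1, by omega⟩
      have h3 := S.cb1 i v
      rw [h1 _ (by omega), ih (i + 2) (by omega) (by omega), h2 (i + 1) (by omega),
        h2 i (by omega)] at h3
      apply S.p_inj
      simpa using h3.symm
  intro j hj
  exact key K j hj (by omega)

theorem red (m : ℕ) (N : ℕ) : ∀ v : V, v ∈ S.H (m + 1) →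
    (∀ j, 1 ≤ j → S.cb j (S.δ v) = 0) → (∀ j, N + 1 ≤ j → S.cb j v = 0) →
    ∃ u γ, (∀ j, S.ca j u ∈ S.G m ∧ S.cb j u ∈ S.G (m - 1)) ∧ γ ∈ S.G (m - 1) ∧
      (∀ j, 1 ≤ j → S.cb j (v - S.δ u) = 0) ∧ S.cb 0 (v - S.δ u) = S.w γ := by
  induction N with
  | zero =>
    intro v hv h1 h2
    have hv' := (S.H_iff m v).1 hv
    have h3 := S.ca_van v 1 h1 h2
    have h4 := S.cb1 0 v
    rw [h1 _ (by omega), h2 _ (by omega), h3 _ (by omega)] at h4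
    have h5 : S.w (S.cb 0 v) = S.p (S.ca 1 v) := by
      simp at h4
      exact (sub_eq_zero.1 h4.symm).symm
    have h6 := S.hom (S.cb 0 v)
    rw [h5, S.iop] at h6
    obtain ⟨u, hu1, hu2⟩ := S.sur 0 (S.io (S.ca 1 v) + S.g (S.cb 0 v)) 0
    refine ⟨u, S.io (S.cb 0 v), ?_, S.G_io _ _ (hv' 0).2, ?_, ?_⟩
    · intro j
      rw [hu1, hu2]
      constructor
      · split_ifs
        · exact Submodule.add_mem _ (by simpa using S.G_io _ _ (hv' 1).1) (S.G_g _ _ (hv' 0).2)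
        · exact Submodule.zero_mem _
      · simp
    · intro j hj
      obtain ⟨i, rfl⟩ : ∃ i, j = i + 1 := ⟨j - 1, by omega⟩
      rw [map_sub, S.cb1]
      simp [hu1, hu2, h2 _ hj]
    · rw [map_sub, S.cb0]
      simp only [hu1, hu2]
      simp only [one_ne_zero, if_true, if_false, ite_self, map_zero, zero_add, sub_zero, map_add]
      nth_rewrite 1 [h6]
      abel
  | succ N ih =>
    intro v hv h1 h2
    have hv' := (S.H_iff m v).1 hv
    have h3 := S.ca_van v (N + 2) h1 h2
    have h4 := S.cb1 (N + 1) v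
    rw [h1 _ (by omega), h2 _ (by omega), h3 _ (by omega)] at h4
    have h5 : S.w (S.cb (N + 1) v) = S.p (S.ca (N + 2) v) := by
      simp at h4
      exact (sub_eq_zero.1 h4.symm).symm
    have h6 := S.hom (S.cb (N + 1) v)
    rw [h5, S.iop] at h6
    obtain ⟨u1, hu1, hu2⟩ := S.sur (N + 1) (S.io (S.ca (N + 2) v) + S.g (S.cb (N + 1) v)) 0
    obtain ⟨u2, hu3, hu4⟩ := S.sur N 0 (- S.io (S.cb (N + 1) v))
    have hu : ∀ j, S.ca j (u1 + u2) ∈ S.G m ∧ S.cb j (u1 + u2) ∈ S.G (m - 1) := by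
      intro j
      rw [map_add, map_add, hu1, hu2, hu3, hu4]
      simp only [ite_self, add_zero, zero_add]
      constructor
      · split_ifs
        · exact Submodule.add_mem _ (by simpa using S.G_io _ _ (hv' (N + 2)).1)
            (S.G_g _ _ (hv' (N + 1)).2)
        · exact Submodule.zero_mem _
      · split_ifs
        · exact Submodule.neg_mem _ (S.G_io _ _ (hv' (N + 1)).2)
        · exact Submodule.zero_mem _
    have hk0 : v - S.δ (u1 + u2) ∈ S.H (m + 1) := by
      apply Submodule.sub_mem _ hv
      rw [S.H_iff]
      have hG : ∀ j, S.w (S.cb j (u1 + u2)) ∈ S.G m ∧ S.d (S.cb j (u1 + u2)) ∈ S.G m := by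
        intro j
        rcases m with _ | m
        · have : S.cb j (u1 + u2) = 0 := by
            rw [map_add, hu2, hu4, S.G_io0 _ (hv' (N + 1)).2]
            simp
          rw [this]
          simp
        · exact ⟨S.G_w _ _ (hu j).2, S.G_d _ _ (hu j).2⟩
      intro j
      rcases j with _ | j
      · rw [S.ca0, S.cb0]
        exact ⟨S.G_d _ _ (hu _).1, Submodule.sub_mem _ (Submodule.add_mem _ (hu _).1
          ((S.G_p _ _).2 (hu _).1)) (hG _).2⟩
      · rw [S.ca1, S.cb1]
        exact ⟨Submodule.add_mem _ (S.G_d _ _ (hu _).1) (S.G_w _ _ (hu _).1),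
          Submodule.sub_mem _ (Submodule.sub_mem _ (Submodule.add_mem _
          (Submodule.smul_mem _ _ (hu _).1)
          ((S.G_p _ _).2 (hu _).1)) (hG _).2) (hG _).1⟩
    have hk1 : ∀ j, 1 ≤ j → S.cb j (S.δ (v - S.δ (u1 + u2))) = 0 := by
      intro j hj
      rw [map_sub, S.δδ, sub_zero]
      exact h1 j hj
    have hk2 : ∀ j, N + 1 ≤ j → S.cb j (v - S.δ (u1 + u2)) = 0 := by
      intro j hj
      obtain ⟨i, rfl⟩ : ∃ i, j = i + 1 := ⟨j - 1, by omega⟩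
      rw [map_sub, S.cb1]
      simp only [map_add _ u1 u2, hu1, hu2, hu3, hu4, ite_self]
      rw [if_neg (by omega : ¬ (i + 2 = N + 1)), if_neg (by omega : ¬ (i + 1 = N))]
      by_cases hi : i = N
      · subst hi
        simp only [if_true, ite_self, map_add, map_neg, map_zero, add_zero, zero_add, smul_zero,
          sub_zero, sub_neg_eq_add]
        nth_rewrite 1 [h6]
        abel
      · rw [if_neg (by omega : ¬ (i + 1 = N + 1)), if_neg hi, h2 _ (by omega)]
        simp
    obtain ⟨u', γ, ha, hb, hc, he⟩ := ih (v - S.δ (u1 + u2)) hk0 hk1 hk2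
    refine ⟨u1 + u2 + u', γ, ?_, hb, ?_, ?_⟩
    · intro j
      rw [map_add _ (u1 + u2), map_add _ (u1 + u2)]
      exact ⟨Submodule.add_mem _ (hu j).1 (ha j).1, Submodule.add_mem _ (hu j).2 (ha j).2⟩
    · intro j hj
      rw [map_add _ (u1 + u2), ← sub_sub]
      exact hc j hj
    · rw [map_add _ (u1 + u2), ← sub_sub]
      exact he

/-- The relation between `ω` and `θ`. -/
def Rel (ω : M) (θ : V) : Prop :=
  S.cb 0 θ = - S.w ω ∧ ∀ j, 1 ≤ j → S.cb j θ = 0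

theorem exists_rel (k : ℕ) (ω α β : M) (hω : ω ∈ S.G k) (h : S.d ω = S.p α + S.w β) :
    ∃ θ, θ ∈ S.H (k + 2) ∧ S.δ θ = 0 ∧ S.Rel ω θ := by
  have e1 : S.p (S.w α) = S.w (S.d ω) := by rw [h, map_add, S.ww, S.wp, add_zero]
  have e2 : S.d (S.w α) = 0 := by
    apply S.p_inj
    have := S.dp (S.w α)
    rw [S.ww, e1, S.dw, S.dd] at this
    simpa using this.symm
  obtain ⟨θ, h1, h2⟩ := S.sur 0 (S.w α) (- S.w ω)
  refine ⟨θ, ?_, ?_, ?_, ?_⟩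
  · rw [S.H_iff]
    intro j
    rw [h1, h2]
    constructor
    · split_ifs
      · rw [← S.G_p, e1]
        exact S.G_w _ _ (S.G_d _ _ hω)
      · exact Submodule.zero_mem _
    · split_ifs
      · exact Submodule.neg_mem _ (S.G_w _ _ hω)
      · exact Submodule.zero_mem _
  · apply S.inj
    · intro j
      rcases j with _ | j
      · simp [S.ca0, h1, e2]
      · simp only [S.ca1, h1]
        by_cases hj : j = 0 <;> simp [S.ww, hj]
    · intro j
      rcases j with _ | j
      · simp [S.cb0, h1, h2, e1, S.dw]
      · simp only [S.cb1, h1, h2]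
        by_cases hj : j = 0 <;> simp [S.ww, hj]
  · simp [h2]
  · intro j hj
    rw [h2, if_neg (by omega)]

theorem exists_bound (v : V) : ∃ N, ∀ j, N + 1 ≤ j → S.cb j v = 0 := by
  obtain ⟨N, hN⟩ := S.fin v
  exact ⟨N, fun j hj => (hN j (by omega)).2⟩

/-- Common final step. -/
theorem final (v : V) (x y : M) (h1 : ∀ j, 1 ≤ j → S.cb j (S.δ v) = 0)
    (h0 : S.cb 0 (S.δ v) = - S.w x)
    (h2 : ∀ j, 1 ≤ j → S.cb j v = 0) (h3 : S.cb 0 v = S.w y) :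
    ∃ α β, x + S.d y = S.p α + S.w β := by
  have h4 := S.ca_van v 1 h1 h2
  have h5 : S.ca 1 v = 0 := by
    have h6 := S.cb1 0 v
    rw [h1 _ (by omega), h2 _ (by omega), h4 _ (by omega), h3, S.ww] at h6
    apply S.p_inj
    simpa using h6.symm
  have h6 := S.cb0 v
  rw [h5, h0, h3, S.dw] at h6
  have h7 : S.w (x + S.d y) = - S.p (S.ca 0 v) := by
    rw [map_add, ← neg_eq_iff_eq_neg, neg_add, h6]
    abel
  have h8 := S.hom (x + S.d y)
  rw [h7, map_neg, S.iop] at h8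
  refine ⟨S.g (x + S.d y) - S.io (S.ca 0 v), S.io (x + S.d y), ?_⟩
  rw [map_sub]
  nth_rewrite 1 [h8]
  abel

theorem exists_rel' (k : ℕ) (θ : V) (hθ : θ ∈ S.H (k + 2)) (hd : S.δ θ = 0) :
    ∃ ω u α β, ω ∈ S.G k ∧ S.d ω = S.p α + S.w β ∧ u ∈ S.H (k + 1) ∧
      S.Rel ω (θ - S.δ u) := by
  obtain ⟨N, hN⟩ := S.exists_bound θ
  obtain ⟨u, γ, ha, hb, hc, he⟩ := S.red (k + 1) N θ hθ (by simp [hd]) hN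
  have hd' : S.δ (θ - S.δ u) = 0 := by rw [map_sub, hd, S.δδ, sub_zero]
  obtain ⟨α, β, h⟩ := S.final (θ - S.δ u) 0 γ (by simp [hd']) (by simp [hd']) hc he
  refine ⟨-γ, u, -α, -β, Submodule.neg_mem _ hb, ?_, ?_, ?_, hc⟩
  · rw [map_neg, map_neg, map_neg, ← neg_add, ← h, zero_add]
  · rw [S.H_iff]
    exact ha
  · rw [he, map_neg, neg_neg]

theorem rel_left (k : ℕ) (ω : M) (u : V) (hu : u ∈ S.H (k + 1)) (h : S.Rel ω (S.δ u)) :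
    ∃ η α β, η ∈ S.G (k - 1) ∧ ω = S.d η + (S.p α + S.w β) := by
  obtain ⟨N, hN⟩ := S.exists_bound u
  obtain ⟨u', γ, ha, hb, hc, he⟩ := S.red k N u hu h.2 hN
  have hd : S.δ (u - S.δ u') = S.δ u := by rw [map_sub, S.δδ, sub_zero]
  obtain ⟨α, β, h⟩ := S.final (u - S.δ u') ω γ (by rw [hd]; exact h.2) (by rw [hd]; exact h.1) hc he
  refine ⟨-γ, α, β, Submodule.neg_mem _ hb, ?_⟩
  rw [← h, map_neg]
  abel

theorem rel_right (k : ℕ) (ω η α β : M) (hω : ω ∈ S.G k) (hη : η ∈ S.G (k - 1))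
    (h : ω = S.d η + S.p α + S.w β) (θ : V) (hd : S.δ θ = 0) (hr : S.Rel ω θ) :
    ∃ u ∈ S.H (k + 1), S.δ u = θ := by
  obtain ⟨η, α, β, h, h1, h2⟩ := S.G_B k ω η α β hω hη h
  obtain ⟨u, h3, h4⟩ := S.sur 0 (- S.w α) (- S.w η)
  refine ⟨u, ?_, ?_⟩
  · rw [S.H_iff]
    intro j
    rw [h3, h4]
    constructor
    · split_ifs
      · exact Submodule.neg_mem _ (S.G_w _ _ h2)
      · exact Submodule.zero_mem _
    · split_ifs
      · exact Submodule.neg_mem _ h1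
      · exact Submodule.zero_mem _
  · have hb : ∀ j, S.cb j (S.δ u - θ) = 0 := by
      intro j
      rw [map_sub]
      rcases j with _ | j
      · rw [hr.1, S.cb0, h3, h3, h4, h]
        simp [S.dw, S.wp, S.ww]
        abel
      · rw [hr.2 _ (by omega), S.cb1, h3, h3, h4, h4]
        by_cases hj : j = 0 <;> simp [S.ww, hj]
    have hd' : S.δ (S.δ u - θ) = 0 := by rw [map_sub, hd, S.δδ, sub_zero]
    rw [← sub_eq_zero]
    refine S.inj _ ?_ hb
    have h5 := S.ca_van (S.δ u - θ) 0 (by simp [hd']) (fun j _ => hb j)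
    intro j
    rcases j with _ | j
    · have h6 := S.cb0 (S.δ u - θ)
      rw [hd', hb, h5 1 (by omega)] at h6
      apply S.p_inj
      simpa using h6.symm
    · exact h5 _ (by omega)

end Setup
section SignLemmas

variable {n : ℕ} {K : Type*} [CommRing K]

theorem sgn_erase_of_not_lt (s : Finset (Fin n)) {i j : Fin n} (h : ¬ j < i) :
    sgn K (s.erase j) i = sgn K s i := by
  unfold sgn
  rw [Finset.filter_erase, Finset.erase_eq_of_notMem]
  simp [h]

theorem sgn_erase_of_lt (s : Finset (Fin n)) {i j : Fin n} (hj : j ∈ s) (h : j < i) :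
    sgn K s i = - sgn K (s.erase j) i := by
  unfold sgn
  have hm : j ∈ s.filter (fun j => j < i) := by simp [h, hj]
  rw [Finset.filter_erase, ← Finset.card_erase_add_one hm, pow_succ]
  ring

theorem sgn_swap (s : Finset (Fin n)) {i j : Fin n} (hi : i ∈ s) (hj : j ∈ s) (h : i ≠ j) :
    sgn K s i * sgn K (s.erase i) j = - (sgn K s j * sgn K (s.erase j) i) := by
  rcases lt_or_gt_of_ne h with h | h
  · rw [sgn_erase_of_not_lt s (not_lt.2 h.le), sgn_erase_of_lt s hi h]
    ring
  · rw [sgn_erase_of_not_lt s (not_lt.2 h.le), sgn_erase_of_lt s hj h]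
    ring

theorem sgn_swap' (s : Finset (Fin n)) {i j : Fin n} (hi : i ∉ s) (hj : j ∈ s) :
    sgn K s i * sgn K (insert i s) j = - (sgn K s j * sgn K (s.erase j) i) := by
  have hne : i ≠ j := fun h => hi (h ▸ hj)
  have h1 : sgn K (insert i s) i = sgn K s i := by
    have := sgn_erase_of_not_lt (K := K) (insert i s) (lt_irrefl i)
    rwa [Finset.erase_insert hi, eq_comm] at this
  have := sgn_swap (K := K) (insert i s) (Finset.mem_insert_self i s)
    (Finset.mem_insert_of_mem hj) hne
  rw [Finset.erase_insert hi, h1] at this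
  rcases lt_or_gt_of_ne hne with h | h
  · have h2 := sgn_erase_of_lt (K := K) (insert i s) (Finset.mem_insert_self i s) h
    rw [Finset.erase_insert hi] at h2
    rw [h2, sgn_erase_of_not_lt s (not_lt.2 h.le)]
    ring
  · have h2 := sgn_erase_of_not_lt (K := K) (insert i s) (not_lt.2 h.le)
    rw [Finset.erase_insert hi] at h2
    rw [← h2, sgn_erase_of_lt s hj h]
    ring

theorem sgn_mul_self (s : Finset (Fin n)) (i : Fin n) : sgn K s i * sgn K s i = 1 := by
  unfold sgn
  rw [← mul_pow]
  simp

theorem pderiv_sgn_mul (s : Finset (Fin n)) (i j : Fin n) (x : MvPolynomial (Fin n) K) :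
    pderiv j (sgn K s i * x) = sgn K s i * pderiv j x := by
  have h : sgn K s i = 1 ∨ sgn K s i = -1 := neg_one_pow_eq_or _ _
  rcases h with h | h <;> simp [h]

theorem pderiv_comm' (i j : Fin n) (x : MvPolynomial (Fin n) K) :
    pderiv i (pderiv j x) = pderiv j (pderiv i x) := by
  have h : ⁅(pderiv i : Derivation K _ _), (pderiv j : Derivation K _ (MvPolynomial (Fin n) K))⁆
      = 0 := by
    apply MvPolynomial.derivation_ext
    intro k
    rw [Derivation.commutator_apply]
    simp only [pderiv_X, Pi.single_apply]
    split_ifs <;> simp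
  have := congrArg (fun D => D x) h
  simp only [Derivation.commutator_apply] at this
  exact sub_eq_zero.1 this

theorem double_sum_zero [CharZero K] [IsDomain K] (s : Finset (Fin n))
    (h : Fin n → Fin n → MvPolynomial (Fin n) K)
    (hs : ∀ i j, h i j = h j i) :
    ∑ i ∈ s, ∑ j ∈ s.erase i, sgn K s i * (sgn K (s.erase i) j * h i j) = 0 := by
  have e : ∑ i ∈ s, ∑ j ∈ s.erase i, sgn K s i * (sgn K (s.erase i) j * h i j)
      = - ∑ i ∈ s, ∑ j ∈ s.erase i, sgn K s i * (sgn K (s.erase i) j * h i j) := by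
    conv_lhs =>
      rw [Finset.sum_comm' (t' := s) (s' := fun j => s.erase j) (by
        intro x y
        simp only [Finset.mem_erase]
        tauto)]
    rw [← Finset.sum_neg_distrib]
    refine Finset.sum_congr rfl fun i hi => ?_
    rw [← Finset.sum_neg_distrib]
    refine Finset.sum_congr rfl fun j hj => ?_
    rw [Finset.mem_erase] at hj
    rw [← mul_assoc, ← mul_assoc, sgn_swap s hj.2 hi hj.1, hs j i]
    ring
  exact CharZero.eq_neg_self_iff.1 e

end SignLemmas

section Ops

variable {n : ℕ} {F : Type*} [Field F]

theorem dRham_apply (ω : Form n F) (s : Finset (Fin n)) :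
    dRham n F ω s = ∑ i ∈ s, sgn F s i * pderiv i (ω (s.erase i)) := by
  simp [dRham, dTwist]

theorem wedge1_apply (q : Fin n → MvPolynomial (Fin n) F) (ω : Form n F) (s : Finset (Fin n)) :
    wedge1 q ω s = ∑ i ∈ s, sgn F s i * (q i * ω (s.erase i)) := rfl

theorem mulForm_apply (q : MvPolynomial (Fin n) F) (ω : Form n F) (s : Finset (Fin n)) :
    mulForm q ω s = q * ω s := rfl

/-- Contraction with a vector field. -/
def contr (v : Fin n → MvPolynomial (Fin n) F) : Form n F →ₗ[F] Form n F where
  toFun ω := fun s => ∑ i ∈ sᶜ, sgn F s i * (v i * ω (insert i s))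
  map_add' ω₁ ω₂ := by
    funext s
    simp only [Pi.add_apply]
    rw [← Finset.sum_add_distrib]
    refine Finset.sum_congr rfl fun i _ => ?_
    ring
  map_smul' c ω := by
    funext s
    simp only [Pi.smul_apply, RingHom.id_apply, Finset.smul_sum]
    refine Finset.sum_congr rfl fun i _ => ?_
    simp [mul_smul_comm]

theorem contr_apply (v : Fin n → MvPolynomial (Fin n) F) (ω : Form n F) (s : Finset (Fin n)) :
    contr v ω s = ∑ i ∈ sᶜ, sgn F s i * (v i * ω (insert i s)) := rfl

theorem op_dd [CharZero F] (ω : Form n F) : dRham n F (dRham n F ω) = 0 := by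
  funext s
  rw [dRham_apply]
  rw [Pi.zero_apply, ← double_sum_zero s (fun i j => pderiv i (pderiv j (ω ((s.erase i).erase j))))]
  · refine Finset.sum_congr rfl fun i _ => ?_
    rw [dRham_apply, map_sum, Finset.mul_sum]
    refine Finset.sum_congr rfl fun j _ => ?_
    rw [pderiv_sgn_mul]
  · intro i j
    rw [pderiv_comm', Finset.erase_right_comm]

theorem op_ww [CharZero F] (q : Fin n → MvPolynomial (Fin n) F) (ω : Form n F) :
    wedge1 q (wedge1 q ω) = 0 := by
  funext s
  rw [wedge1_apply]
  rw [Pi.zero_apply, ← double_sum_zero s (fun i j => q i * (q j * (ω ((s.erase i).erase j))))]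
  · refine Finset.sum_congr rfl fun i _ => ?_
    rw [wedge1_apply, Finset.mul_sum, Finset.mul_sum]
    refine Finset.sum_congr rfl fun j _ => ?_
    ring
  · intro i j
    rw [Finset.erase_right_comm]
    ring

theorem op_dw [CharZero F] (P : MvPolynomial (Fin n) F) (ω : Form n F) :
    dRham n F (wedge1 (grad P) ω) = - wedge1 (grad P) (dRham n F ω) := by
  rw [← add_eq_zero_iff_eq_neg]
  funext s
  rw [Pi.add_apply, wedge1_apply, dRham_apply]
  rw [Pi.zero_apply, ← double_sum_zero s (fun i j => pderiv i (pderiv j P) * ω ((s.erase i).erase j)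
    + pderiv j P * pderiv i (ω ((s.erase i).erase j))
    + pderiv i P * pderiv j (ω ((s.erase i).erase j)))]
  · rw [← Finset.sum_add_distrib]
    refine Finset.sum_congr rfl fun i _ => ?_
    rw [wedge1_apply, dRham_apply, map_sum, Finset.mul_sum, Finset.mul_sum, Finset.mul_sum,
      ← Finset.sum_add_distrib]
    refine Finset.sum_congr rfl fun j _ => ?_
    rw [pderiv_sgn_mul, pderiv_mul]
    simp only [grad]
    ring
  · intro i j
    rw [Finset.erase_right_comm, pderiv_comm']
    ring

theorem op_dp (P : MvPolynomial (Fin n) F) (ω : Form n F) :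
    dRham n F (mulForm P ω) = wedge1 (grad P) ω + mulForm P (dRham n F ω) := by
  funext s
  rw [Pi.add_apply, wedge1_apply, dRham_apply, mulForm_apply, dRham_apply, Finset.mul_sum,
    ← Finset.sum_add_distrib]
  refine Finset.sum_congr rfl fun i _ => ?_
  rw [mulForm_apply, pderiv_mul]
  simp only [grad]
  ring

theorem op_wp (P : MvPolynomial (Fin n) F) (q : Fin n → MvPolynomial (Fin n) F) (ω : Form n F) :
    wedge1 q (mulForm P ω) = mulForm P (wedge1 q ω) := by
  funext s
  rw [wedge1_apply, mulForm_apply, wedge1_apply, Finset.mul_sum]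
  refine Finset.sum_congr rfl fun i _ => ?_
  rw [mulForm_apply]
  ring

theorem op_iop (P : MvPolynomial (Fin n) F) (q : Fin n → MvPolynomial (Fin n) F) (ω : Form n F) :
    contr q (mulForm P ω) = mulForm P (contr q ω) := by
  funext s
  rw [contr_apply, mulForm_apply, contr_apply, Finset.mul_sum]
  refine Finset.sum_congr rfl fun i _ => ?_
  rw [mulForm_apply]
  ring

theorem op_hom (v q : Fin n → MvPolynomial (Fin n) F) (ω : Form n F) (s : Finset (Fin n)) :
    wedge1 q (contr v ω) s + contr v (wedge1 q ω) s = (∑ i, v i * q i) * ω s := by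
  have h1 : wedge1 q (contr v ω) s = ∑ j ∈ s, (v j * q j * ω s +
      ∑ i ∈ sᶜ, sgn F s j * sgn F (s.erase j) i * (q j * v i * ω (insert i (s.erase j)))) := by
    rw [wedge1_apply]
    refine Finset.sum_congr rfl fun j hj => ?_
    rw [contr_apply, Finset.compl_erase, Finset.sum_insert (by simpa using hj),
      Finset.insert_erase hj, sgn_erase_of_not_lt s (lt_irrefl j), mul_add, mul_add,
      Finset.mul_sum, Finset.mul_sum]
    congr 1
    · linear_combination (v j * q j * ω s) * sgn_mul_self (K := F) s j
    · refine Finset.sum_congr rfl fun i _ => ?_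
      ring
  have h2 : contr v (wedge1 q ω) s = ∑ i ∈ sᶜ, (v i * q i * ω s -
      ∑ j ∈ s, sgn F s j * sgn F (s.erase j) i * (q j * v i * ω (insert i (s.erase j)))) := by
    rw [contr_apply]
    refine Finset.sum_congr rfl fun i hi => ?_
    rw [Finset.mem_compl] at hi
    have h3 : sgn F (insert i s) i = sgn F s i := by
      have := sgn_erase_of_not_lt (K := F) (insert i s) (lt_irrefl i)
      rwa [Finset.erase_insert hi, eq_comm] at this
    rw [wedge1_apply, Finset.sum_insert hi, Finset.erase_insert hi, h3, mul_add, mul_add,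
      Finset.mul_sum, Finset.mul_sum, sub_eq_add_neg, ← Finset.sum_neg_distrib]
    congr 1
    · linear_combination (v i * q i * ω s) * sgn_mul_self (K := F) s i
    · refine Finset.sum_congr rfl fun j hj => ?_
      have hne : i ≠ j := fun h => hi (h ▸ hj)
      rw [Finset.erase_insert_of_ne hne]
      linear_combination (q j * v i * ω (insert i (s.erase j))) * sgn_swap' (K := F) s hi hj
  rw [h1, h2, Finset.sum_add_distrib, Finset.sum_sub_distrib, Finset.sum_comm,
    ← Finset.sum_add_sum_compl s, add_mul, Finset.sum_mul, Finset.sum_mul]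
  ring

theorem mem_formDeg {k : ℕ} {ω : Form n F} :
    ω ∈ formDeg n F k ↔ ∀ s : Finset (Fin n), s.card ≠ k → ω s = 0 := Iff.rfl

theorem deg_d (k : ℕ) (ω : Form n F) (h : ω ∈ formDeg n F k) :
    dRham n F ω ∈ formDeg n F (k + 1) := by
  intro s hs
  rw [dRham_apply]
  refine Finset.sum_eq_zero fun i hi => ?_
  rw [h (s.erase i)]
  · simp
  · have := Finset.card_erase_add_one hi
    omega

theorem deg_w (q : Fin n → MvPolynomial (Fin n) F) (k : ℕ) (ω : Form n F)
    (h : ω ∈ formDeg n F k) : wedge1 q ω ∈ formDeg n F (k + 1) := by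
  intro s hs
  rw [wedge1_apply]
  refine Finset.sum_eq_zero fun i hi => ?_
  rw [h (s.erase i)]
  · simp
  · have := Finset.card_erase_add_one hi
    omega

theorem deg_g (q : MvPolynomial (Fin n) F) (k : ℕ) (ω : Form n F)
    (h : ω ∈ formDeg n F k) : mulForm q ω ∈ formDeg n F k := by
  intro s hs
  rw [mulForm_apply, h s hs, mul_zero]

theorem deg_p (q : MvPolynomial (Fin n) F) (hq : q ≠ 0) (k : ℕ) (ω : Form n F) :
    mulForm q ω ∈ formDeg n F k ↔ ω ∈ formDeg n F k := by
  refine ⟨fun h s hs => ?_, deg_g q k ω⟩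
  have := h s hs
  rw [mulForm_apply] at this
  exact (mul_eq_zero.1 this).resolve_left hq

theorem deg_io (q : Fin n → MvPolynomial (Fin n) F) (k : ℕ) (ω : Form n F)
    (h : ω ∈ formDeg n F k) : contr q ω ∈ formDeg n F (k - 1) := by
  intro s hs
  rw [contr_apply]
  refine Finset.sum_eq_zero fun i hi => ?_
  rw [h (insert i s)]
  · simp
  · rw [Finset.card_insert_of_notMem (by simpa using hi)]
    omega

theorem deg_io0 (q : Fin n → MvPolynomial (Fin n) F) (ω : Form n F)
    (h : ω ∈ formDeg n F 0) : contr q ω = 0 := by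
  funext s
  rw [contr_apply]
  refine Finset.sum_eq_zero fun i hi => ?_
  rw [h (insert i s)]
  · simp
  · rw [Finset.card_insert_of_notMem (by simpa using hi)]
    omega

/-- Projection on degree `k`. -/
def proj (k : ℕ) (ω : Form n F) : Form n F := fun s => if s.card = k then ω s else 0

theorem proj_mem (k : ℕ) (ω : Form n F) : proj k ω ∈ formDeg n F k := by
  intro s hs
  simp [proj, hs]

theorem deg_B (P : MvPolynomial (Fin n) F) (k : ℕ) (x η α β : Form n F)
    (hx : x ∈ formDeg n F k) (hη : η ∈ formDeg n F (k - 1))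
    (h : x = dRham n F η + mulForm P α + wedge1 (grad P) β) :
    ∃ η' α' β', x = dRham n F η' + mulForm P α' + wedge1 (grad P) β' ∧
      wedge1 (grad P) η' ∈ formDeg n F k ∧ α' ∈ formDeg n F k := by
  have hs : ∀ s, x s = dRham n F η s + P * α s + wedge1 (grad P) β s := fun s => congrFun h s
  rcases k with _ | k
  · refine ⟨0, proj 0 α, 0, ?_, by simp, proj_mem _ _⟩
    funext s
    simp only [map_zero, zero_add, add_zero, mulForm_apply, proj]
    split_ifs with hc
    · rw [hs s]
      rw [Finset.card_eq_zero] at hc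
      subst hc
      simp [dRham_apply, wedge1_apply]
    · rw [hx s hc, mul_zero]
  · refine ⟨η, proj (k + 1) α, proj k β, ?_, deg_w _ _ _ hη, proj_mem _ _⟩
    funext s
    simp only [Pi.add_apply]
    by_cases hc : s.card = k + 1
    · rw [hs s]
      simp only [mulForm_apply, proj, if_pos hc]
      congr 1
      rw [wedge1_apply, wedge1_apply]
      refine Finset.sum_congr rfl fun i hi => ?_
      have := Finset.card_erase_add_one hi
      simp only [proj]
      rw [if_pos (by omega)]
    · rw [hx s hc, deg_d _ _ hη s hc, deg_w _ _ _ (proj_mem k β) s hc,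
        deg_g _ _ _ (proj_mem (k + 1) α) s hc]
      simp

end Ops
section Split

variable {n : ℕ} {F : Type*} [Field F]

/-- Polynomials in `n+1` variables as polynomials in the last variable. -/
def phi (n : ℕ) (F : Type*) [Field F] :
    MvPolynomial (Fin (n + 1)) F ≃ₐ[F] Polynomial (MvPolynomial (Fin n) F) :=
  (renameEquiv F finSuccEquivLast).trans (optionEquivLeft F (Fin n))

theorem phi_X_castSucc (i : Fin n) : phi n F (X i.castSucc) = Polynomial.C (X i) := by
  simp [phi, optionEquivLeft_X_some]

theorem phi_X_last : phi n F (X (Fin.last n)) = Polynomial.X := by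
  simp [phi, optionEquivLeft_X_none]

theorem phi_C (r : F) : phi n F (C r) = Polynomial.C (C r) := by
  simp [phi, optionEquivLeft_C]

theorem phi_rename (q : MvPolynomial (Fin n) F) :
    phi n F (rename Fin.castSucc q) = Polynomial.C q := by
  induction q using MvPolynomial.induction_on with
  | C r => rw [rename_C, phi_C]
  | add p q hp hq => rw [map_add, map_add, hp, hq, map_add]
  | mul_X p i hp => rw [map_mul, map_mul, hp, rename_X, phi_X_castSucc, map_mul]

theorem phi_pderiv_last (f : MvPolynomial (Fin (n + 1)) F) :
    phi n F (pderiv (Fin.last n) f) = Polynomial.derivative (phi n F f) := by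
  induction f using MvPolynomial.induction_on with
  | C r => simp [phi_C]
  | add p q hp hq => simp [hp, hq]
  | mul_X p i hp =>
    rw [pderiv_mul, map_add, map_mul, map_mul, map_mul, hp, Polynomial.derivative_mul]
    have hX : phi n F (pderiv (Fin.last n) (X i)) = Polynomial.derivative (phi n F (X i)) := by
      induction i using Fin.lastCases with
      | last => rw [phi_X_last, pderiv_X_self, map_one, Polynomial.derivative_X]
      | cast i =>
        rw [pderiv_X_of_ne (Fin.castSucc_lt_last i).ne, phi_X_castSucc, map_zero,
          Polynomial.derivative_C]
    rw [hX]

theorem phi_pderiv_castSucc (i : Fin n) (f : MvPolynomial (Fin (n + 1)) F) (j : ℕ) :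
    (phi n F (pderiv i.castSucc f)).coeff j = pderiv i ((phi n F f).coeff j) := by
  induction f using MvPolynomial.induction_on generalizing j with
  | C r => 
    rw [pderiv_C, phi_C, Polynomial.coeff_C]
    split_ifs <;> simp
  | add p q hp hq => simp [hp, hq]
  | mul_X p k hp =>
    rw [pderiv_mul, map_add, map_mul, map_mul, map_mul]
    induction k using Fin.lastCases with
    | last =>
      rw [pderiv_X_of_ne (Fin.castSucc_lt_last i).ne', phi_X_last, map_zero, mul_zero, add_zero]
      cases j with
      | zero => simp
      | succ j => simp [Polynomial.coeff_mul_X, hp]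
    | cast k =>
      rw [phi_X_castSucc, Polynomial.coeff_add, Polynomial.coeff_mul_C, Polynomial.coeff_mul_C,
        pderiv_mul, hp]
      congr 1
      by_cases h : k = i
      · subst h
        simp
      · rw [pderiv_X_of_ne h, pderiv_X_of_ne (fun h' => h (Fin.castSucc_injective _ h'))]
        simp

theorem phi_grad_castSucc (P : MvPolynomial (Fin n) F) (i : Fin n) :
    phi n F (grad (tP P) i.castSucc) = Polynomial.X * Polynomial.C (pderiv i P) := by
  ext1 j
  rw [grad, phi_pderiv_castSucc, tP, map_mul, phi_X_last, phi_rename, Polynomial.coeff_mul_C,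
    Polynomial.coeff_mul_C, Polynomial.coeff_X]
  split_ifs <;> simp

theorem phi_grad_last (P : MvPolynomial (Fin n) F) :
    phi n F (grad (tP P) (Fin.last n)) = Polynomial.C P := by
  rw [grad, phi_pderiv_last, tP, map_mul, phi_X_last, phi_rename]
  simp

/-- Index sets not containing the last index. -/
def up (s : Finset (Fin n)) : Finset (Fin (n + 1)) := s.image Fin.castSucc

/-- Index sets containing the last index. -/
def upl (s : Finset (Fin n)) : Finset (Fin (n + 1)) := insert (Fin.last n) (up s)

/-- Forget the last index. -/
def down (s' : Finset (Fin (n + 1))) : Finset (Fin n) :=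
  Finset.univ.filter (fun i => i.castSucc ∈ s')

theorem castSucc_mem_up (s : Finset (Fin n)) (i : Fin n) : i.castSucc ∈ up s ↔ i ∈ s := by
  simp [up]

theorem last_notMem_up (s : Finset (Fin n)) : Fin.last n ∉ up s := by
  simp [up]

theorem castSucc_mem_upl (s : Finset (Fin n)) (i : Fin n) : i.castSucc ∈ upl s ↔ i ∈ s := by
  rw [upl, Finset.mem_insert, castSucc_mem_up]
  simp

theorem last_mem_upl (s : Finset (Fin n)) : Fin.last n ∈ upl s := by
  simp [upl]

theorem down_up (s : Finset (Fin n)) : down (up s) = s := by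
  ext i
  simp [down, castSucc_mem_up]

theorem down_upl (s : Finset (Fin n)) : down (upl s) = s := by
  ext i
  simp [down, castSucc_mem_upl]

theorem eq_up_or_upl (s' : Finset (Fin (n + 1))) : ∃ s, s' = up s ∨ s' = upl s := by
  refine ⟨down s', ?_⟩
  by_cases h : Fin.last n ∈ s'
  · right
    ext i
    induction i using Fin.lastCases with
    | last => simp [h, last_mem_upl]
    | cast i => simp [castSucc_mem_upl, down]
  · left
    ext i
    induction i using Fin.lastCases with
    | last => simp [h, last_notMem_up]
    | cast i => simp [castSucc_mem_up, down]

theorem up_injective : Function.Injective (up (n := n)) := by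
  intro s t h
  rw [← down_up s, h, down_up]

theorem card_up (s : Finset (Fin n)) : (up s).card = s.card :=
  Finset.card_image_of_injective _ (Fin.castSucc_injective n)

theorem card_upl (s : Finset (Fin n)) : (upl s).card = s.card + 1 := by
  rw [upl, Finset.card_insert_of_notMem (last_notMem_up s), card_up]

theorem up_erase (s : Finset (Fin n)) (i : Fin n) : (up s).erase i.castSucc = up (s.erase i) := by
  rw [up, up, Finset.image_erase (Fin.castSucc_injective n)]

theorem upl_erase (s : Finset (Fin n)) (i : Fin n) :
    (upl s).erase i.castSucc = upl (s.erase i) := by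
  rw [upl, upl, ← up_erase, Finset.erase_insert_of_ne (Fin.castSucc_lt_last i).ne']

theorem upl_erase_last (s : Finset (Fin n)) : (upl s).erase (Fin.last n) = up s := by
  rw [upl, Finset.erase_insert (last_notMem_up s)]

theorem phi_sgn_up (s : Finset (Fin n)) (i : Fin n) :
    phi n F (sgn F (up s) i.castSucc) = Polynomial.C (sgn F s i) := by
  have : (up s).filter (fun j => j < i.castSucc) = up (s.filter (fun j => j < i)) := by
    simp only [up, Finset.filter_image, Fin.castSucc_lt_castSucc_iff]
  simp [sgn, this, card_up]

theorem phi_sgn_upl (s : Finset (Fin n)) (i : Fin n) :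
    phi n F (sgn F (upl s) i.castSucc) = Polynomial.C (sgn F s i) := by
  rw [← phi_sgn_up, sgn, sgn, upl, Finset.filter_insert, if_neg]
  exact not_lt.2 (Fin.castSucc_lt_last i).le

theorem sgn_upl_last (s : Finset (Fin n)) :
    sgn F (upl s) (Fin.last n) = (-1) ^ s.card := by
  rw [sgn, upl, Finset.filter_insert, if_neg (lt_irrefl _), Finset.filter_true_of_mem, card_up]
  intro x hx
  rw [up, Finset.mem_image] at hx
  obtain ⟨i, _, rfl⟩ := hx
  exact Fin.castSucc_lt_last i

theorem sum_up {β : Type*} [AddCommMonoid β] (s : Finset (Fin n)) (f : Fin (n + 1) → β) :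
    ∑ i ∈ up s, f i = ∑ i ∈ s, f i.castSucc :=
  Finset.sum_image (fun _ _ _ _ h => Fin.castSucc_injective n h)

theorem sum_upl {β : Type*} [AddCommMonoid β] (s : Finset (Fin n)) (f : Fin (n + 1) → β) :
    ∑ i ∈ upl s, f i = f (Fin.last n) + ∑ i ∈ s, f i.castSucc := by
  rw [upl, Finset.sum_insert (last_notMem_up s), sum_up]

/-- Coefficient of `t^j`, part without `dt`. -/
def cA (j : ℕ) : Form (n + 1) F →ₗ[F] Form n F where
  toFun θ := fun s => (phi n F (θ (up s))).coeff j
  map_add' a b := by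
    funext s
    simp
  map_smul' c a := by
    funext s
    simp

/-- Coefficient of `dt t^j`. -/
def cB (j : ℕ) : Form (n + 1) F →ₗ[F] Form n F where
  toFun θ := fun s => (-1) ^ s.card * (phi n F (θ (upl s))).coeff j
  map_add' a b := by
    funext s
    simp [mul_add]
  map_smul' c a := by
    funext s
    simp

theorem cA_apply (j : ℕ) (θ : Form (n + 1) F) (s : Finset (Fin n)) :
    cA j θ s = (phi n F (θ (up s))).coeff j := rfl

theorem cB_apply (j : ℕ) (θ : Form (n + 1) F) (s : Finset (Fin n)) :
    cB j θ s = (-1) ^ s.card * (phi n F (θ (upl s))).coeff j := rfl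

theorem dTwist_apply (α : Fin n → MvPolynomial (Fin n) F) (ω : Form n F) (s : Finset (Fin n)) :
    dTwist α ω s = ∑ i ∈ s,
      sgn F s i * (pderiv i (ω (s.erase i)) + α i * ω (s.erase i)) := rfl

theorem deg_dTwist (q : Fin n → MvPolynomial (Fin n) F) (k : ℕ) (ω : Form n F)
    (h : ω ∈ formDeg n F k) : dTwist q ω ∈ formDeg n F (k + 1) := by
  intro s hs
  rw [dTwist_apply]
  refine Finset.sum_eq_zero fun i hi => ?_
  rw [h (s.erase i)]
  · simp
  · have := Finset.card_erase_add_one hi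
    omega

theorem phi_d_up (P : MvPolynomial (Fin n) F) (θ : Form (n + 1) F) (s : Finset (Fin n)) (j : ℕ) :
    (phi n F (dTwist (grad (tP P)) θ (up s))).coeff j =
      ∑ i ∈ s, sgn F s i * (pderiv i ((phi n F (θ (up (s.erase i)))).coeff j) +
        pderiv i P * (Polynomial.X * phi n F (θ (up (s.erase i)))).coeff j) := by
  rw [dTwist_apply, sum_up, map_sum, Polynomial.finsetSum_coeff]
  refine Finset.sum_congr rfl fun i _ => ?_
  rw [map_mul, phi_sgn_up, Polynomial.coeff_C_mul, map_add, Polynomial.coeff_add,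
    phi_pderiv_castSucc, map_mul, phi_grad_castSucc, up_erase, mul_comm Polynomial.X, mul_assoc,
    Polynomial.coeff_C_mul]

theorem phi_d_upl (P : MvPolynomial (Fin n) F) (θ : Form (n + 1) F) (s : Finset (Fin n)) (j : ℕ) :
    (phi n F (dTwist (grad (tP P)) θ (upl s))).coeff j =
      (-1) ^ s.card * ((Polynomial.derivative (phi n F (θ (up s)))).coeff j +
        P * (phi n F (θ (up s))).coeff j) +
      ∑ i ∈ s, sgn F s i * (pderiv i ((phi n F (θ (upl (s.erase i)))).coeff j) +
        pderiv i P * (Polynomial.X * phi n F (θ (upl (s.erase i)))).coeff j) := by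
  rw [dTwist_apply, sum_upl, map_add, Polynomial.coeff_add, map_sum, Polynomial.finsetSum_coeff]
  congr 1
  · rw [sgn_upl_last, upl_erase_last, map_mul, map_add, map_mul, phi_pderiv_last, phi_grad_last]
    have : phi n F ((-1) ^ s.card) = Polynomial.C ((-1) ^ s.card) := by simp
    rw [this, Polynomial.coeff_C_mul, Polynomial.coeff_add, Polynomial.coeff_C_mul]
  · refine Finset.sum_congr rfl fun i _ => ?_
    rw [map_mul, phi_sgn_upl, Polynomial.coeff_C_mul, map_add, Polynomial.coeff_add,
      phi_pderiv_castSucc, map_mul, phi_grad_castSucc, upl_erase, mul_comm Polynomial.X, mul_assoc,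
      Polynomial.coeff_C_mul]

theorem s_ca0 (P : MvPolynomial (Fin n) F) (θ : Form (n + 1) F) :
    cA 0 (dTwist (grad (tP P)) θ) = dRham n F (cA 0 θ) := by
  funext s
  rw [cA_apply, phi_d_up, dRham_apply]
  refine Finset.sum_congr rfl fun i _ => ?_
  simp [cA_apply]

theorem s_ca1 (P : MvPolynomial (Fin n) F) (j : ℕ) (θ : Form (n + 1) F) :
    cA (j + 1) (dTwist (grad (tP P)) θ) =
      dRham n F (cA (j + 1) θ) + wedge1 (grad P) (cA j θ) := by
  funext s
  rw [cA_apply, phi_d_up, Pi.add_apply, dRham_apply, wedge1_apply, ← Finset.sum_add_distrib]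
  refine Finset.sum_congr rfl fun i _ => ?_
  rw [Polynomial.coeff_X_mul, mul_add]
  simp only [cA_apply, grad]

theorem pderiv_sign_mul (k : ℕ) (j : Fin n) (x : MvPolynomial (Fin n) F) :
    pderiv j ((-1) ^ k * x) = (-1) ^ k * pderiv j x := by
  rcases neg_one_pow_eq_or (MvPolynomial (Fin n) F) k with h | h <;> simp [h]

theorem sign_erase (s : Finset (Fin n)) {i : Fin n} (hi : i ∈ s) :
    (-1 : MvPolynomial (Fin n) F) ^ (s.erase i).card = - (-1) ^ s.card := by
  rw [← Finset.card_erase_add_one hi, pow_succ]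
  ring

theorem sign_sq (k : ℕ) : (-1 : MvPolynomial (Fin n) F) ^ k * (-1) ^ k = 1 := by
  rw [← mul_pow]
  simp

theorem s_cb0 (P : MvPolynomial (Fin n) F) (θ : Form (n + 1) F) :
    cB 0 (dTwist (grad (tP P)) θ) =
      cA 1 θ + mulForm P (cA 0 θ) - dRham n F (cB 0 θ) := by
  funext s
  rw [cB_apply, phi_d_upl, mul_add, ← mul_assoc, sign_sq, Pi.sub_apply, sub_eq_add_neg]
  congr 1
  · simp [cA_apply, mulForm_apply, Polynomial.coeff_derivative]
  · rw [dRham_apply, Finset.mul_sum, ← Finset.sum_neg_distrib]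
    refine Finset.sum_congr rfl fun i hi => ?_
    rw [cB_apply, sign_erase s hi, neg_mul, map_neg, pderiv_sign_mul]
    simp only [Polynomial.mul_coeff_zero, Polynomial.coeff_X_zero]
    ring

theorem s_cb1 (P : MvPolynomial (Fin n) F) (j : ℕ) (θ : Form (n + 1) F) :
    cB (j + 1) (dTwist (grad (tP P)) θ) =
      ((j : F) + 2) • cA (j + 2) θ + mulForm P (cA (j + 1) θ) - dRham n F (cB (j + 1) θ)
        - wedge1 (grad P) (cB j θ) := by
  funext s
  rw [cB_apply, phi_d_upl, mul_add, ← mul_assoc, sign_sq, sub_sub, Pi.sub_apply, sub_eq_add_neg]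
  congr 1
  · simp only [one_mul, Polynomial.coeff_derivative, Pi.add_apply, Pi.smul_apply, cA_apply,
      mulForm_apply, smul_eq_C_mul]
    push_cast
    simp only [map_add, map_natCast, map_ofNat]
    ring
  · rw [Pi.add_apply, dRham_apply, wedge1_apply, ← Finset.sum_add_distrib, Finset.mul_sum,
      ← Finset.sum_neg_distrib]
    refine Finset.sum_congr rfl fun i hi => ?_
    rw [cB_apply, cB_apply, sign_erase s hi, neg_mul, map_neg, pderiv_sign_mul,
      Polynomial.coeff_X_mul]
    simp only [grad]
    ring

theorem s_inj (θ : Form (n + 1) F) (h1 : ∀ j, cA j θ = 0) (h2 : ∀ j, cB j θ = 0) : θ = 0 := by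
  funext s'
  obtain ⟨s, rfl | rfl⟩ := eq_up_or_upl s'
  · apply (phi n F).injective
    ext1 j
    have := congrFun (h1 j) s
    rw [cA_apply] at this
    simpa using this
  · apply (phi n F).injective
    ext1 j
    have := congrFun (h2 j) s
    rw [cB_apply] at this
    simpa using this

theorem s_fin (θ : Form (n + 1) F) : ∃ N, ∀ j, N ≤ j → cA j θ = 0 ∧ cB j θ = 0 := by
  refine ⟨Finset.univ.sup (fun s' => (phi n F (θ s')).natDegree) + 1, fun j hj => ?_⟩
  have key : ∀ s', (phi n F (θ s')).coeff j = 0 := by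
    intro s'
    apply Polynomial.coeff_eq_zero_of_natDegree_lt
    have := Finset.le_sup (f := fun s' => (phi n F (θ s')).natDegree) (Finset.mem_univ s')
    omega
  constructor
  · funext s
    rw [cA_apply, key]
    rfl
  · funext s
    rw [cB_apply, key]
    simp

theorem s_sur (i : ℕ) (x y : Form n F) : ∃ θ : Form (n + 1) F,
    (∀ j, cA j θ = if j = i then x else 0) ∧ (∀ j, cB j θ = if j = i then y else 0) := by
  refine ⟨fun s' => if Fin.last n ∈ s' then
    (phi n F).symm (Polynomial.monomial i ((-1) ^ (down s').card * y (down s'))) else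
    (phi n F).symm (Polynomial.monomial i (x (down s'))), ?_, ?_⟩
  · intro j
    funext s
    rw [cA_apply, if_neg (last_notMem_up s), AlgEquiv.apply_symm_apply, down_up,
      Polynomial.coeff_monomial]
    by_cases h : j = i
    · simp [h]
    · simp [h, Ne.symm h]
  · intro j
    funext s
    rw [cB_apply, if_pos (last_mem_upl s), AlgEquiv.apply_symm_apply, down_upl,
      Polynomial.coeff_monomial]
    by_cases h : j = i
    · simp [h, ← mul_assoc, sign_sq]
    · simp [h, Ne.symm h]

theorem s_H (k : ℕ) (θ : Form (n + 1) F) : θ ∈ formDeg (n + 1) F (k + 1) ↔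
    ∀ j, cA j θ ∈ formDeg n F (k + 1) ∧ cB j θ ∈ formDeg n F k := by
  constructor
  · intro h j
    constructor
    · intro s hs
      rw [cA_apply, h (up s) (by rwa [card_up])]
      simp
    · intro s hs
      rw [cB_apply, h (upl s) (by rw [card_upl]; omega)]
      simp
  · intro h s' hs'
    apply (phi n F).injective
    ext1 j
    obtain ⟨s, rfl | rfl⟩ := eq_up_or_upl s'
    · have := (h j).1 s (by rwa [card_up] at hs')
      rw [cA_apply] at this
      simpa using this
    · have := (h j).2 s (by rw [card_upl] at hs'; omega)
      rw [cB_apply] at this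
      simpa using this

theorem extForm_up (ω : Form n F) (s : Finset (Fin n)) :
    extForm ω (up s) = rename Fin.castSucc (ω s) := by
  unfold extForm
  rw [Finset.sum_eq_single s]
  · exact if_pos rfl
  · intro t _ ht
    exact if_neg (fun h => ht (up_injective h).symm)
  · simp

theorem cB_theta (P : MvPolynomial (Fin n) F) (ω : Form n F) (j : ℕ) :
    cB j (thetaMap P ω) = if j = 0 then - wedge1 (grad P) ω else 0 := by
  funext s
  have h1 : wedge1 (dtForm n F) (wedge1 (liftDP P) (extForm ω)) (upl s) =
      (-1) ^ s.card * wedge1 (liftDP P) (extForm ω) (up s) := by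
    rw [wedge1_apply, sum_upl, Finset.sum_eq_zero, add_zero, sgn_upl_last, upl_erase_last]
    · simp [dtForm]
    · intro i _
      simp [dtForm, (Fin.castSucc_lt_last i).ne]
  have h2 : phi n F (wedge1 (liftDP P) (extForm ω) (up s)) =
      Polynomial.C (wedge1 (grad P) ω s) := by
    rw [wedge1_apply, sum_up, map_sum, wedge1_apply, map_sum]
    refine Finset.sum_congr rfl fun i _ => ?_
    rw [map_mul, map_mul, phi_sgn_up, up_erase, extForm_up, phi_rename, map_mul, map_mul]
    simp only [liftDP, Fin.lastCases_castSucc, phi_rename, grad]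
  have h3 : phi n F ((-1) ^ s.card) = Polynomial.C ((-1) ^ s.card) := by simp
  rw [cB_apply, thetaMap, h1, map_neg, map_mul, h2, h3, ← Polynomial.C_mul, Polynomial.coeff_neg,
    Polynomial.coeff_C]
  split_ifs
  · rw [Pi.neg_apply]
    linear_combination (- wedge1 (grad P) ω s) * sign_sq (F := F) (n := n) s.card
  · simp

/-- The concrete instance of the abstract situation. -/
def theSetup [CharZero F] (P : MvPolynomial (Fin n) F) (hP : P ≠ 0)
    (g : MvPolynomial (Fin n) F) (v : Fin n → MvPolynomial (Fin n) F)
    (h : g * P + ∑ i, v i * pderiv i P = 1) : Setup F (Form n F) (Form (n + 1) F) where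
  d := dRham n F
  w := wedge1 (grad P)
  p := mulForm P
  io := contr v
  g := mulForm g
  G := formDeg n F
  H := formDeg (n + 1) F
  δ := dTwist (grad (tP P))
  ca := cA
  cb := cB
  dd := op_dd
  ww := op_ww _
  dw := op_dw P
  dp := op_dp P
  wp := op_wp P _
  iop := op_iop P _
  hom := by
    intro x
    funext s
    rw [Pi.add_apply, Pi.add_apply, op_hom, mulForm_apply, mulForm_apply]
    simp only [grad]
    linear_combination (- x s) * h
  p_inj := by
    intro x hx
    funext s
    have := congrFun hx s
    rw [mulForm_apply] at this
    exact (mul_eq_zero.1 this).resolve_left hP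
  G_d := deg_d
  G_w := deg_w _
  G_p := deg_p P hP
  G_g := deg_g g
  G_io := deg_io v
  G_io0 := deg_io0 v
  G_B := deg_B P
  H_iff := s_H
  inj := s_inj
  fin := s_fin
  sur := s_sur
  ca0 := s_ca0 P
  ca1 := s_ca1 P
  cb0 := s_cb0 P
  cb1 := s_cb1 P

theorem mem_relSub (P : MvPolynomial (Fin n) F) (x : Form n F) :
    x ∈ relSub P ↔ ∃ α β, x = mulForm P α + wedge1 (grad P) β := by
  rw [relSub, Submodule.mem_sup]
  constructor
  · rintro ⟨_, ⟨α, rfl⟩, _, ⟨β, rfl⟩, rfl⟩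
    exact ⟨α, β, rfl⟩
  · rintro ⟨α, β, rfl⟩
    exact ⟨_, ⟨α, rfl⟩, _, ⟨β, rfl⟩, rfl⟩

theorem main_aux [CharZero F] (P : MvPolynomial (Fin n) F) (hP : P ≠ 0)
    (g : MvPolynomial (Fin n) F) (v : Fin n → MvPolynomial (Fin n) F)
    (h : g * P + ∑ i, v i * pderiv i P = 1) (k : ℕ) :
    ∃ e : (relH P k) ≃ₗ[F] Hf (tP P) (k + 2),
      ∀ (ω : relZ P k) (θ : cocycles (grad (tP P)) (k + 2)),
        (θ : Form (n + 1) F) = thetaMap P (ω : Form n F) →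
          e (Submodule.Quotient.mk ω) = Submodule.Quotient.mk θ := by
  let S := theSetup P hP g v h
  let R : Submodule F (relZ P k × cocycles (grad (tP P)) (k + 2)) :=
    { carrier := {x | S.Rel x.1 x.2}
      add_mem' := by
        rintro ⟨a, b⟩ ⟨a', b'⟩ ⟨h1, h2⟩ ⟨h1', h2'⟩
        refine ⟨?_, fun j hj => ?_⟩
        · simp only [Prod.fst_add, Prod.snd_add, Submodule.coe_add, map_add] at *
          rw [h1, h1']
          abel
        · have e1 := h2 j hj
          have e2 := h2' j hj
          simp only [Prod.snd_add, Submodule.coe_add, map_add] at *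
          rw [e1, e2, add_zero]
      zero_mem' := by
        refine ⟨?_, fun j hj => ?_⟩ <;> simp
      smul_mem' := by
        rintro c ⟨a, b⟩ ⟨h1, h2⟩
        refine ⟨?_, fun j hj => ?_⟩
        · simp only [Prod.smul_fst, Prod.smul_snd, Submodule.coe_smul, map_smul] at *
          rw [h1, smul_neg]
        · have e1 := h2 j hj
          simp only [Prod.smul_snd, Submodule.coe_smul, map_smul] at *
          rw [e1, smul_zero] }
  have hh1 : ∀ a, ∃ b, (a, b) ∈ R := by
    rintro ⟨ω, hω1, hω2⟩
    obtain ⟨α, β, hab⟩ := (mem_relSub P _).1 hω2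
    obtain ⟨θ, h1, h2, h3⟩ := S.exists_rel k ω α β hω1 hab
    exact ⟨⟨θ, h1, h2⟩, h3⟩
  have hh2 : ∀ b, ∃ a b', (a, b') ∈ R ∧ b - b' ∈ Submodule.comap
      (cocycles (grad (tP P)) (k + 2)).subtype (cobounds (grad (tP P)) (k + 2)) := by
    rintro ⟨θ, hθ1, hθ2⟩
    obtain ⟨ω, u, α, β, h1, h2, h3, h4⟩ := S.exists_rel' k θ hθ1 hθ2
    have hu : S.δ u ∈ cobounds (grad (tP P)) (k + 2) := ⟨u, h3, rfl⟩
    have hz : θ - S.δ u ∈ cocycles (grad (tP P)) (k + 2) := by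
      refine ⟨Submodule.sub_mem _ hθ1 (deg_dTwist _ _ _ h3), ?_⟩
      change dTwist (grad (tP P)) (θ - S.δ u) = 0
      rw [map_sub]
      have e1 : dTwist (grad (tP P)) (S.δ u) = 0 := S.δδ u
      have e2 : dTwist (grad (tP P)) θ = 0 := hθ2
      rw [e1, e2, sub_zero]
    refine ⟨⟨ω, h1, (mem_relSub P _).2 ⟨α, β, h2⟩⟩, ⟨θ - S.δ u, hz⟩, h4, ?_⟩
    rw [Submodule.mem_comap]
    simpa using hu
  have hh3 : ∀ a b, (a, b) ∈ R → (a ∈ Submodule.comap (relZ P k).subtype (relB P k) ↔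
      b ∈ Submodule.comap (cocycles (grad (tP P)) (k + 2)).subtype
        (cobounds (grad (tP P)) (k + 2))) := by
    rintro ⟨ω, hω1, hω2⟩ ⟨θ, hθ1, hθ2⟩ hr
    rw [Submodule.mem_comap, Submodule.mem_comap]
    constructor
    · intro hb
      obtain ⟨_, ⟨η, hη, rfl⟩, y, hy, hxy⟩ := Submodule.mem_sup.1 hb
      obtain ⟨α, β, rfl⟩ := (mem_relSub P _).1 hy
      rw [← add_assoc] at hxy
      obtain ⟨u, hu, hu'⟩ := S.rel_right k ω η α β hω1 hη hxy.symm θ hθ2 hr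
      exact ⟨u, hu, hu'⟩
    · rintro ⟨u, hu, hu'⟩
      have hr' : S.Rel ω (S.δ u) := by
        have : S.δ u = θ := hu'
        rw [this]
        exact hr
      obtain ⟨η, α, β, h1, h2⟩ := S.rel_left k ω u hu hr'
      exact Submodule.mem_sup.2 ⟨_, ⟨η, h1, rfl⟩, _, (mem_relSub P _).2 ⟨α, β, rfl⟩, h2.symm⟩
  obtain ⟨e, he⟩ := equiv_of_relation
    (Submodule.comap (relZ P k).subtype (relB P k))
    (Submodule.comap (cocycles (grad (tP P)) (k + 2)).subtype (cobounds (grad (tP P)) (k + 2)))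
    R hh1 hh2 hh3
  refine ⟨e, fun ω θ hθ => he ω θ ?_⟩
  refine ⟨?_, fun j hj => ?_⟩
  · change cB 0 (θ : Form (n + 1) F) = _
    rw [hθ, cB_theta, if_pos rfl]
    rfl
  · change cB j (θ : Form (n + 1) F) = _
    rw [hθ, cB_theta, if_neg (by omega)]

end Split
/-- Let `F` be a field of characteristic zero and
`P ∈ F[x_1,…,x_n]` with the hypersurface `P = 0` smooth (the ideal
`(P, ∂_1P, …, ∂_nP)` is the unit ideal).  Then the map `ω ↦ ω̃∧dP∧dt` induces
for every `k` an isomorphism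
`H^k(Ω/(P,dP)) ≅ H^{k+2}_{tP}(F^{n+1})`. -/
theorem hypersurface_cohomology_as_twisted_deRham {F : Type*} [Field F]
    [CharZero F] {n : ℕ} (hn : 0 < n) (P : MvPolynomial (Fin n) F)
    (hsmooth :
      Ideal.span ({P} ∪ Set.range fun i => pderiv i P) =
        (⊤ : Ideal (MvPolynomial (Fin n) F))) :
    ∃ e : ∀ k : ℕ, (relH P k) ≃ₗ[F] Hf (tP P) (k + 2),
      ∀ (k : ℕ) (ω : relZ P k) (θ : cocycles (grad (tP P)) (k + 2)),
        (θ : Form (n + 1) F) = thetaMap P (ω : Form n F) →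
          e k (Submodule.Quotient.mk ω) = Submodule.Quotient.mk θ := by
  have h1 : (1 : MvPolynomial (Fin n) F) ∈
      Ideal.span ({P} ∪ Set.range fun i => pderiv i P) := by
    rw [hsmooth]
    exact Submodule.mem_top
  rw [Ideal.span_union, Submodule.mem_sup] at h1
  obtain ⟨y, hy, z, hz, hyz⟩ := h1
  obtain ⟨g, rfl⟩ := Ideal.mem_span_singleton'.1 hy
  obtain ⟨v, rfl⟩ := (Ideal.mem_span_range_iff_exists_fun).1 hz
  have hP : P ≠ 0 := by
    rintro rfl
    simp at hyz
  choose e he using main_aux P hP g v hyz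
  exact ⟨e, he⟩

end
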